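/- For any real t > 1 and any positive integer n₁ ≥ max{ 6, 1/(1−2^{−1/(t−1)}) }, one has (1−2^{1−t})·n₁/(2^{2t}(t−1)·p_{n₁}^t) < ∑_{n=n₁}^{∞} p_n^{-t} < 2^{1+t}·n₁/((t−1)·p_{n₁}^t). -/

import Mathlib

/-- The `n`-th prime number, 1-indexed: `nthPrime 1 = 2`, `nthPrime 2 = 3`, ... -/
noncomputable def nthPrime (n : ℕ) : ℕ := Nat.nth Nat.Prime (n - 1)

/-!
Chebyshev's estimates keep `π x / x` from growing or dropping quickly: `x * π y ≤ 3 * y * π x` for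
`2 ≤ x ≤ y`, and `y * π x ≤ 4 * x * π y` for `x ≤ y ≤ 8 * x`. At primes `x = p_n` and `y = p_m`
these say that `p_m / m ≥ p_n / (3 * n)` for `m ≥ n`, and `p_m / m ≤ 4 * p_n / n` for
`n ≤ m ≤ 2 * n`. The lower bound on the tail comes from comparing the terms `n ≤ m < 2 * n` with
`∫ x ^ (-t)` over `[n, 2 * n]`. For the upper bound, the estimate `p_m ≥ p_n * m / (3 * n)` beats
`p_m ≥ p_n` only for `m > 3 * n`, where the sum is again compared with an integral; each of the
remaining `2 * n + 1` terms is at most `p_n ^ (-t)`.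
-/

open Finset Real
open scoped Nat.Prime Chebyshev

theorem log_le_mul_log_two_add_div_sub_one {x : ℝ} (hx : 0 < x) (k : ℕ) :
    log x ≤ k * log 2 + x / 2 ^ k - 1 := by
  have h := log_le_sub_one_of_pos (show 0 < x / 2 ^ k by positivity)
  rw [log_div hx.ne' (by positivity), log_pow] at h
  linarith

theorem mul_log_two_le_log {x k : ℕ} (h : 2 ^ k ≤ x) : k * log 2 ≤ log x := by
  rw [← log_pow]
  exact log_le_log (by positivity) (by exact_mod_cast h)

theorem log_le_mul_log_two_add_log {x y j : ℕ} (hx : 0 < x) (hy : 0 < y) (h : y ≤ 2 ^ j * x) :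
    log y ≤ j * log 2 + log x := by
  rw [← log_pow, ← log_mul (by positivity) (by positivity)]
  exact log_le_log (by positivity) (by exact_mod_cast h)

theorem primeCounting_le_self (n : ℕ) : π n ≤ n := by
  rw [← Nat.primesLE_card_eq_primeCounting, Nat.primesLE_eq_filter_Icc_one]
  simpa using card_filter_le (Icc 1 n) Nat.Prime

theorem fifteen_mul_primeCounting_le (n : ℕ) : 15 * π n ≤ 4 * n + 150 := by
  have h30 : π 30 = 10 := by decide +kernel
  rcases le_total n 30 with h | h
  · have := Nat.monotone_primeCounting h
    omega
  · have h := Nat.primeCounting_add_le (a := 30) (k := 30) (by norm_num) le_rfl (n - 30)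
    rw [show Nat.totient 30 = 8 by decide] at h
    grind

theorem theta_two_mul_le (n : ℕ) : θ (2 * n : ℕ) ≤ θ n + 2 * n * log 2 := by
  have hprimorial : primorial (2 * n) ≤ primorial n * 4 ^ n := by
    rw [two_mul]
    refine (primorial_add_le le_rfl).trans (Nat.mul_le_mul_left _ ?_)
    rw [← two_mul]
    exact Nat.centralBinom_le_four_pow n
  have hpos (m : ℕ) : (0 : ℝ) < primorial m := by exact_mod_cast primorial_pos m
  simp only [Chebyshev.theta_eq_log_primorial, Nat.floor_natCast]
  calc log (primorial (2 * n)) ≤ log (primorial n * 4 ^ n) :=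
        log_le_log (hpos _) (by exact_mod_cast hprimorial)
    _ = log (primorial n) + 2 * n * log 2 := by
        rw [log_mul (hpos n).ne' (by positivity), show (4 : ℝ) = 2 ^ 2 by norm_num, ← pow_mul,
          log_pow]
        push_cast
        ring

theorem primeCounting_sub_mul_log_le_theta_sub {m n : ℕ} (h : m ≤ n) :
    ((π n : ℝ) - π m) * log m ≤ θ n - θ m := by
  rcases m.eq_zero_or_pos with rfl | hm
  · simpa using Chebyshev.theta_nonneg n
  have hsub : m.primesLE ⊆ n.primesLE := Nat.primesLE_mono h
  rw [Chebyshev.theta_eq_sum_primesLE_log, Chebyshev.theta_eq_sum_primesLE_log,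
    ← sum_sdiff_eq_sub hsub, ← Nat.primesLE_card_eq_primeCounting,
    ← Nat.primesLE_card_eq_primeCounting, ← cast_card_sdiff hsub, ← nsmul_eq_mul]
  refine card_nsmul_le_sum _ _ _ fun p hp ↦ ?_
  have hmp : m ≤ p := by grind [Nat.mem_primesLE]
  gcongr

theorem primeCounting_mul_log_le_of_le {n : ℕ} (h48 : 48 ≤ n) (h512 : n ≤ 512) :
    π n * log n ≤ 19 / 10 * n := by
  have hpi : (15 * π n : ℝ) ≤ 4 * n + 150 := by exact_mod_cast fifteen_mul_primeCounting_le n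
  have hn : (48 : ℝ) ≤ n := by exact_mod_cast h48
  have hlog2 := log_two_lt_d9
  suffices (4 * n + 150) * log n ≤ 57 / 2 * n by
    linarith [mul_le_mul_of_nonneg_right hpi (log_natCast_nonneg n)]
  -- The tangents to `log` at `2 ^ 6` and `2 ^ 8` are accurate enough on the two subintervals.
  rcases le_total n 128 with h | h
  · have hlog := log_le_mul_log_two_add_div_sub_one (show (0 : ℝ) < n by positivity) 6
    have h : (n : ℝ) ≤ 128 := by exact_mod_cast h
    norm_num at hlog
    nlinarith
  · have hlog := log_le_mul_log_two_add_div_sub_one (show (0 : ℝ) < n by positivity) 8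
    have h : (128 : ℝ) ≤ n := by exact_mod_cast h
    have h512 : (n : ℝ) ≤ 512 := by exact_mod_cast h512
    norm_num at hlog
    nlinarith

theorem primeCounting_mul_log_le_of_half {n k : ℕ} (hk : 256 ≤ k) (hnk : n ≤ 2 * k)
    (hkn : 2 * k ≤ n + 1) (ih : π k * log k ≤ 19 / 10 * k) : π n * log n ≤ 19 / 10 * n := by
  have hlog2 := log_two_lt_d9
  have hlogk : 8 * log 2 ≤ log k := by exact_mod_cast mul_log_two_le_log (k := 8) hk
  have hlogn : log n ≤ 9 / 8 * log k := by
    have h := log_le_mul_log_two_add_log (j := 1) (by omega : 0 < k) (by omega)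
      (hnk.trans_eq (by ring))
    push_cast at h
    linarith
  have hpi : (π n : ℝ) ≤ π (2 * k) := by exact_mod_cast Nat.monotone_primeCounting hnk
  have hdiff : ((π (2 * k) : ℝ) - π k) * log k ≤ 2 * k * log 2 := by
    linarith [primeCounting_sub_mul_log_le_theta_sub (show k ≤ 2 * k by omega), theta_two_mul_le k]
  have hk : (256 : ℝ) ≤ k := by exact_mod_cast hk
  have hkn : (2 * k : ℝ) ≤ n + 1 := by exact_mod_cast hkn
  calc π n * log n ≤ π (2 * k) * (9 / 8 * log k) := by gcongr
    _ = 9 / 8 * (((π (2 * k) : ℝ) - π k) * log k + π k * log k) := by ring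
    _ ≤ 9 / 8 * (2 * k * log 2 + 19 / 10 * k) := by gcongr
    _ ≤ 19 / 10 * n := by nlinarith

theorem primeCounting_mul_log_le {n : ℕ} (hn : 48 ≤ n) : π n * log n ≤ 19 / 10 * n := by
  induction n using Nat.strong_induction_on with
  | _ n ih =>
    rcases le_or_gt n 512 with h | h
    · exact primeCounting_mul_log_le_of_le hn h
    · exact primeCounting_mul_log_le_of_half (k := (n + 1) / 2) (by omega) (by omega) (by omega)
        (ih _ (by omega) (by omega))

theorem le_primeCounting_mul_log {n : ℕ} (hn : 512 ≤ n) : 17 / 25 * n ≤ π n * log n := by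
  have hpsi := (Chebyshev.psi_ge n).trans (Chebyshev.psi_le_primeCounting_mul_log n)
  have hlog := log_le_mul_log_two_add_div_sub_one (show (0 : ℝ) < n + 1 by positivity) 9
  have hn : (512 : ℝ) ≤ n := by exact_mod_cast hn
  norm_num at hlog
  nlinarith [log_two_gt_d9, log_two_lt_d9]

/-- In the first case `π y ≤ y`, and in the second `15 * π y ≤ 4 * y + 150`, gives
`π y / y ≤ 3 * π x / x` for all `y ≥ x`. -/
theorem le_three_mul_primeCounting_or {x : ℕ} (h2 : 2 ≤ x) (h512 : x < 512) :
    x ≤ 3 * π x ∨ 4 * x + 150 ≤ 45 * π x := by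
  have of_mem_Icc {a b : ℕ} (h : 4 * b + 150 ≤ 45 * π a) (ha : a ≤ x) (hb : x ≤ b) :
      4 * x + 150 ≤ 45 * π x := by
    have := Nat.monotone_primeCounting ha
    omega
  have of_lt : ∀ x < 64, 2 ≤ x → x ≤ 3 * π x ∨ 4 * x + 150 ≤ 45 * π x := by decide +kernel
  rcases lt_or_ge x 64 with h | h64
  · exact of_lt x h h2
  right
  rcases le_total x 165 with h | h165
  · exact of_mem_Icc (by decide +kernel) h64 h
  rcases le_total x 390 with h | h390
  · exact of_mem_Icc (by decide +kernel) h165 h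
  · exact of_mem_Icc (by decide +kernel) h390 h512.le

theorem mul_primeCounting_le_three_mul {x y : ℕ} (hx : 2 ≤ x) (hxy : x ≤ y) :
    x * π y ≤ 3 * y * π x := by
  rcases lt_or_ge x 512 with h | h
  · rcases le_three_mul_primeCounting_or hx h with h | h
    · calc x * π y ≤ 3 * π x * y := Nat.mul_le_mul h (primeCounting_le_self y)
        _ = 3 * y * π x := by ring
    · have := fifteen_mul_primeCounting_le y
      nlinarith
  · have hlower := le_primeCounting_mul_log h
    have hupper := primeCounting_mul_log_le (show 48 ≤ y by omega)
    have hlog : log x ≤ log y := log_le_log (by positivity) (by exact_mod_cast hxy)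
    have : (17 / 25 * (x * π y) : ℝ) ≤ 19 / 10 * (y * π x) :=
      calc (17 / 25 * (x * π y) : ℝ) = 17 / 25 * x * π y := by ring
      _ ≤ π x * log x * π y := by gcongr
      _ ≤ π x * log y * π y := by gcongr
      _ = π x * (π y * log y) := by ring
      _ ≤ π x * (19 / 10 * y) := by gcongr
      _ = 19 / 10 * (y * π x) := by ring
    have hpos : (0 : ℝ) ≤ y * π x := by positivity
    exact_mod_cast (show (x * π y : ℝ) ≤ 3 * y * π x by linarith)

theorem two_mul_primeCounting_le_of_lt {x : ℕ} (hx : x < 128) : 2 * π x ≤ π (4 * x) := by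
  have of_mem_Icc {a b : ℕ} (h : 2 * π b ≤ π (4 * a)) (ha : a ≤ x) (hb : x ≤ b) :
      2 * π x ≤ π (4 * x) :=
    calc 2 * π x ≤ 2 * π b := Nat.mul_le_mul_left 2 (Nat.monotone_primeCounting hb)
      _ ≤ π (4 * a) := h
      _ ≤ π (4 * x) := Nat.monotone_primeCounting (Nat.mul_le_mul_left 4 ha)
  have of_lt : ∀ x < 27, 2 * π x ≤ π (4 * x) := by decide +kernel
  rcases lt_or_ge x 27 with h | h27
  · exact of_lt x h
  rcases le_total x 46 with h | h46
  · exact of_mem_Icc (by decide +kernel) h27 h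
  rcases le_total x 74 with h | h74
  · exact of_mem_Icc (by decide +kernel) h46 h
  · exact of_mem_Icc (by decide +kernel) h74 hx.le

theorem mul_primeCounting_le_four_mul {x y : ℕ} (hxy : x ≤ y) (hyx : y ≤ 8 * x) :
    y * π x ≤ 4 * x * π y := by
  rcases le_total y (4 * x) with h4 | h4
  · exact Nat.mul_le_mul h4 (Nat.monotone_primeCounting hxy)
  rcases lt_or_ge x 128 with hx | hx
  · calc y * π x ≤ 8 * x * π x := Nat.mul_le_mul_right _ hyx
      _ = 4 * x * (2 * π x) := by ring
      _ ≤ 4 * x * π y := Nat.mul_le_mul_left _ <|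
          (two_mul_primeCounting_le_of_lt hx).trans (Nat.monotone_primeCounting h4)
  · have hlower := le_primeCounting_mul_log (show 512 ≤ y by omega)
    have hupper := primeCounting_mul_log_le (show 48 ≤ x by omega)
    have hlogx : 7 * log 2 ≤ log x := by exact_mod_cast mul_log_two_le_log (k := 7) hx
    have hlog : log y ≤ 10 / 7 * log x := by
      have h := log_le_mul_log_two_add_log (j := 3) (by omega) (by omega : 0 < y) hyx
      push_cast at h
      linarith
    have : (17 / 25 * (y * π x) : ℝ) ≤ 19 / 7 * (x * π y) :=
      calc (17 / 25 * (y * π x) : ℝ) = 17 / 25 * y * π x := by ring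
      _ ≤ π y * log y * π x := by gcongr
      _ ≤ π y * (10 / 7 * log x) * π x := by gcongr
      _ = 10 / 7 * π y * (π x * log x) := by ring
      _ ≤ 10 / 7 * π y * (19 / 10 * x) := by gcongr
      _ = 19 / 7 * (x * π y) := by ring
    have hpos : (0 : ℝ) ≤ x * π y := by positivity
    exact_mod_cast (show (y * π x : ℝ) ≤ 4 * x * π y by linarith)

theorem nthPrime_prime (n : ℕ) : (nthPrime n).Prime := Nat.prime_nth_prime _

theorem nthPrime_cast_pos (n : ℕ) : (0 : ℝ) < nthPrime n := by
  exact_mod_cast (nthPrime_prime n).pos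

theorem nthPrime_monotone : Monotone nthPrime := fun _ _ h ↦
  Nat.nth_monotone Nat.infinite_setOfPred_prime (Nat.sub_le_sub_right h 1)

theorem primeCounting_nthPrime {n : ℕ} (hn : 1 ≤ n) : π (nthPrime n) = n := by
  rw [nthPrime, Nat.primeCounting, Nat.primeCounting',
    Nat.count_nth_succ_of_infinite Nat.infinite_setOfPred_prime, Nat.sub_add_cancel hn]

theorem nthPrime_le_of_le_primeCounting {n x : ℕ} (hn : 1 ≤ n) (h : n ≤ π x) : nthPrime n ≤ x := by
  rw [Nat.primeCounting, Nat.primeCounting'] at h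
  have hcount : n - 1 < Nat.count Nat.Prime (x + 1) := by omega
  exact Nat.lt_succ_iff.1 (Nat.nth_lt_of_lt_count hcount)

theorem nthPrime_mul_le_three_mul {n m : ℕ} (hn : 1 ≤ n) (hnm : n ≤ m) :
    nthPrime n * m ≤ 3 * nthPrime m * n := by
  simpa only [primeCounting_nthPrime, hn, hn.trans hnm] using
    mul_primeCounting_le_three_mul (nthPrime_prime n).two_le (nthPrime_monotone hnm)

theorem nthPrime_le_eight_mul {n m : ℕ} (hm : 1 ≤ m) (hmn : m ≤ 2 * n) :
    nthPrime m ≤ 8 * nthPrime n := by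
  have hn : 1 ≤ n := by omega
  refine nthPrime_le_of_le_primeCounting hm (hmn.trans ?_)
  have h := mul_primeCounting_le_four_mul (x := nthPrime n) (y := 8 * nthPrime n) (by omega) le_rfl
  rw [primeCounting_nthPrime hn] at h
  exact Nat.le_of_mul_le_mul_left (by linarith) (Nat.mul_pos four_pos (nthPrime_prime n).pos)

theorem nthPrime_mul_le_four_mul {n m : ℕ} (hn : 1 ≤ n) (hnm : n ≤ m) (hmn : m ≤ 2 * n) :
    nthPrime m * n ≤ 4 * nthPrime n * m := by
  simpa only [primeCounting_nthPrime, hn, hn.trans hnm] using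
    mul_primeCounting_le_four_mul (nthPrime_monotone hnm)
      (nthPrime_le_eight_mul (hn.trans hnm) hmn)

theorem antitoneOn_rpow_neg_Icc {t a b : ℝ} (ht : 0 ≤ t) (ha : 0 < a) :
    AntitoneOn (fun x : ℝ ↦ x ^ (-t)) (Set.Icc a b) :=
  (antitoneOn_rpow_Ioi_of_exponent_nonpos (neg_nonpos.2 ht)).mono fun _ hx ↦ ha.trans_le hx.1

theorem integral_rpow_neg {t a b : ℝ} (ht : t ≠ 1) (ha : 0 < a) (hab : a ≤ b) :
    ∫ x in a..b, x ^ (-t) = (a ^ (1 - t) - b ^ (1 - t)) / (t - 1) := by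
  rw [integral_rpow (Or.inr ⟨by grind, Set.notMem_uIcc_of_lt ha (ha.trans_le hab)⟩),
    neg_add_eq_sub, ← neg_sub t 1, div_neg, ← neg_div, neg_sub]

theorem sum_range_rpow_neg_le {t a : ℝ} (ht : 1 < t) (ha : 0 < a) (N : ℕ) :
    ∑ k ∈ range N, (a + (k + 1 : ℕ)) ^ (-t) ≤ a ^ (1 - t) / (t - 1) := calc
  _ ≤ ∫ x in a..a + N, x ^ (-t) :=
    (antitoneOn_rpow_neg_Icc (by linarith) ha).sum_le_integral
  _ = (a ^ (1 - t) - (a + N) ^ (1 - t)) / (t - 1) :=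
    integral_rpow_neg ht.ne' ha (le_add_of_nonneg_right N.cast_nonneg)
  _ ≤ a ^ (1 - t) / (t - 1) := by
    have : 0 ≤ (a + N) ^ (1 - t) := by positivity
    gcongr
    linarith

theorem le_sum_range_rpow_neg {t a : ℝ} (ht : 0 ≤ t) (ht' : t ≠ 1) (ha : 0 < a) (N : ℕ) :
    (a ^ (1 - t) - (a + N) ^ (1 - t)) / (t - 1) ≤ ∑ k ∈ range N, (a + k) ^ (-t) := by
  rw [← integral_rpow_neg ht' ha (le_add_of_nonneg_right N.cast_nonneg)]
  exact (antitoneOn_rpow_neg_Icc ht ha).integral_le_sum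

theorem sum_range_rpow_neg_le_of_linear_growth {f : ℕ → ℝ} {n K : ℕ} {p t : ℝ} (ht : 1 < t)
    (hn : 0 < n) (hp : 0 < p) (hf : ∀ k, p ≤ f k)
    (hgrowth : ∀ k, p * (n + k : ℕ) ≤ (n + K : ℕ) * f k) (N : ℕ) :
    ∑ k ∈ range N, f k ^ (-t) ≤ (K + 1 + (n + K : ℕ) / (t - 1)) * p ^ (-t) := by
  set r : ℝ := ((n + K : ℕ) : ℝ) with hr
  have hr_pos : 0 < r := by positivity
  have hhead (k : ℕ) : f k ^ (-t) ≤ p ^ (-t) :=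
    rpow_le_rpow_of_nonpos hp (hf k) (by linarith)
  have htail (k : ℕ) : f (K + 1 + k) ^ (-t) ≤ (p / r) ^ (-t) * (r + (k + 1 : ℕ)) ^ (-t) := by
    rw [← mul_rpow (by positivity) (by positivity)]
    refine rpow_le_rpow_of_nonpos (by positivity) ?_ (by linarith)
    rw [div_mul_eq_mul_div, div_le_iff₀' hr_pos]
    have hindex : r + (k + 1 : ℕ) = (n + (K + 1 + k) : ℕ) := by
      push_cast [hr]
      ring
    rw [hindex]
    exact hgrowth _
  have hscale : (p / r) ^ (-t) * (r ^ (1 - t) / (t - 1)) = r / (t - 1) * p ^ (-t) := by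
    rw [div_rpow hp.le hr_pos.le, sub_eq_add_neg, rpow_add hr_pos, rpow_one]
    field_simp
  calc ∑ k ∈ range N, f k ^ (-t) ≤ ∑ k ∈ range (K + 1 + N), f k ^ (-t) :=
        sum_le_sum_of_subset_of_nonneg (range_mono (by omega)) fun k _ _ ↦
          rpow_nonneg (hp.le.trans (hf k)) _
    _ = ∑ k ∈ range (K + 1), f k ^ (-t) + ∑ k ∈ range N, f (K + 1 + k) ^ (-t) :=
        sum_range_add _ _ _
    _ ≤ ∑ _k ∈ range (K + 1), p ^ (-t) +
          ∑ k ∈ range N, (p / r) ^ (-t) * (r + (k + 1 : ℕ)) ^ (-t) :=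
        add_le_add (sum_le_sum fun k _ ↦ hhead k) (sum_le_sum fun k _ ↦ htail k)
    _ ≤ (K + 1) * p ^ (-t) + (p / r) ^ (-t) * (r ^ (1 - t) / (t - 1)) := by
        rw [sum_const, card_range, nsmul_eq_mul, ← mul_sum]
        push_cast
        gcongr
        exact_mod_cast sum_range_rpow_neg_le ht hr_pos N
    _ = _ := by rw [hscale]; ring

theorem le_sum_range_rpow_neg_of_linear_growth {f : ℕ → ℝ} {n : ℕ} {p c t : ℝ} (ht : 0 ≤ t)
    (ht' : t ≠ 1) (hn : 0 < n) (hp : 0 < p) (hc : 0 < c) (hf : ∀ k < n, 0 < f k)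
    (hgrowth : ∀ k < n, f k * n ≤ c * p * (n + k : ℕ)) :
    (1 - (2 : ℝ) ^ (1 - t)) * n / (c ^ t * (t - 1) * p ^ t) ≤ ∑ k ∈ range n, f k ^ (-t) := by
  have hn : (0 : ℝ) < n := by exact_mod_cast hn
  have hterm (k : ℕ) (hk : k ∈ range n) : (c * p / n) ^ (-t) * (n + k : ℝ) ^ (-t) ≤ f k ^ (-t) := by
    rw [← mul_rpow (by positivity) (by positivity)]
    refine rpow_le_rpow_of_nonpos (hf k (mem_range.1 hk)) ?_ (by linarith)
    rw [div_mul_eq_mul_div, le_div_iff₀ hn]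
    exact_mod_cast hgrowth k (mem_range.1 hk)
  calc (1 - (2 : ℝ) ^ (1 - t)) * n / (c ^ t * (t - 1) * p ^ t)
      = (c * p / n) ^ (-t) * (((n : ℝ) ^ (1 - t) - (n + n : ℝ) ^ (1 - t)) / (t - 1)) := by
        rw [← two_mul, mul_rpow two_pos.le hn.le, div_rpow (by positivity) hn.le,
          mul_rpow hc.le hp.le, rpow_neg hc.le, rpow_neg hp.le, rpow_neg hn.le, rpow_sub hn,
          rpow_one]
        field_simp
    _ ≤ (c * p / n) ^ (-t) * ∑ k ∈ range n, (n + k : ℝ) ^ (-t) := by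
        gcongr
        exact le_sum_range_rpow_neg ht ht' hn n
    _ ≤ ∑ k ∈ range n, f k ^ (-t) := by
        rw [mul_sum]
        exact sum_le_sum hterm

theorem three_mul_add_three_lt_four_mul_two_rpow {s : ℝ} (hs : 0 ≤ s) :
    3 * s + 3 < 4 * (2 : ℝ) ^ s := by
  have hlog := log_two_gt_d9
  have h := quadratic_le_exp_of_nonneg (mul_nonneg (log_nonneg one_le_two) hs)
  rw [rpow_def_of_pos two_pos]
  nlinarith [mul_le_mul_of_nonneg_right hlog.le hs]

theorem tsum_subtype_ge_eq_tsum_add {α : Type*} [AddCommMonoid α] [TopologicalSpace α]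
    (f : ℕ → α) (a : ℕ) :
    ∑' n : {n : ℕ // a ≤ n}, f n = ∑' k, f (a + k) := by
  have hrange : Set.range (a + ·) = {n | a ≤ n} := by
    ext n
    simp [le_iff_exists_add, eq_comm]
  rw [← tsum_range f (add_right_injective a), hrange]
  rfl

theorem two_mul_add_one_add_lt {t x : ℝ} (ht : 1 < t) (hx : 1 ≤ x) :
    2 * x + 1 + 3 * x / (t - 1) < 2 ^ (1 + t) * x / (t - 1) := by
  have hs : 0 < t - 1 := sub_pos.2 ht
  have hpow : (2 : ℝ) ^ (1 + t) = 4 * 2 ^ (t - 1) := by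
    rw [show 1 + t = 2 + (t - 1) by ring, rpow_add two_pos]
    norm_num
  rw [lt_div_iff₀ hs, add_mul, div_mul_cancel₀ _ hs.ne', hpow]
  calc (2 * x + 1) * (t - 1) + 3 * x ≤ (3 * (t - 1) + 3) * x := by nlinarith
    _ < 4 * 2 ^ (t - 1) * x := by
      gcongr
      exact three_mul_add_three_lt_four_mul_two_rpow hs.le

theorem sum_range_nthPrime_rpow_neg_le {t : ℝ} (ht : 1 < t) {n : ℕ} (hn : 1 ≤ n) (N : ℕ) :
    ∑ k ∈ range N, (nthPrime (n + k) : ℝ) ^ (-t) ≤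
      (2 * n + 1 + 3 * n / (t - 1)) * (nthPrime n : ℝ) ^ (-t) := by
  have hmono (k : ℕ) : (nthPrime n : ℝ) ≤ nthPrime (n + k) := by
    exact_mod_cast nthPrime_monotone (n.le_add_right k)
  have hgrowth (k : ℕ) :
      (nthPrime n : ℝ) * (n + k : ℕ) ≤ (n + 2 * n : ℕ) * (nthPrime (n + k) : ℝ) := by
    have h := nthPrime_mul_le_three_mul hn (n.le_add_right k)
    exact_mod_cast h.trans_eq (by ring)
  convert sum_range_rpow_neg_le_of_linear_growth ht hn (nthPrime_cast_pos n) hmono hgrowth N using 3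
  all_goals
    push_cast
    ring

theorem le_sum_range_nthPrime_rpow_neg {t : ℝ} (ht : 1 < t) {n : ℕ} (hn : 1 ≤ n) :
    (1 - (2 : ℝ) ^ (1 - t)) * n / (2 ^ (2 * t) * (t - 1) * (nthPrime n : ℝ) ^ t) ≤
      ∑ k ∈ range n, (nthPrime (n + k) : ℝ) ^ (-t) := by
  rw [show (2 : ℝ) ^ (2 * t) = 4 ^ t by rw [rpow_mul two_pos.le]; norm_num]
  refine le_sum_range_rpow_neg_of_linear_growth (by linarith) ht.ne' hn (nthPrime_cast_pos n)
    four_pos (fun k _ ↦ nthPrime_cast_pos (n + k)) fun k hk ↦ ?_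
  exact_mod_cast nthPrime_mul_le_four_mul hn (n.le_add_right k) (by omega : n + k ≤ 2 * n)

theorem tail_sum_reciprocal_prime_powers_vs_nth_prime_general
    (t : ℝ) (ht : 1 < t) (n₁ : ℕ) (hn₁ : 1 ≤ n₁) :
    (1 - (2 : ℝ) ^ (1 - t)) * (n₁ : ℝ) / (2 ^ (2 * t) * (t - 1) * (nthPrime n₁ : ℝ) ^ t) <
        (∑' n : {n : ℕ // n₁ ≤ n}, (nthPrime (n : ℕ) : ℝ) ^ (-t)) ∧
      (∑' n : {n : ℕ // n₁ ≤ n}, (nthPrime (n : ℕ) : ℝ) ^ (-t)) <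
        (2 : ℝ) ^ (1 + t) * (n₁ : ℝ) / ((t - 1) * (nthPrime n₁ : ℝ) ^ t) := by
  have hpos (n : ℕ) : 0 < (nthPrime n : ℝ) ^ (-t) := rpow_pos_of_pos (nthPrime_cast_pos n) _
  have hupper := sum_range_nthPrime_rpow_neg_le ht hn₁
  have hsummable := summable_of_sum_range_le (fun k ↦ (hpos (n₁ + k)).le) hupper
  rw [tsum_subtype_ge_eq_tsum_add fun n ↦ (nthPrime n : ℝ) ^ (-t)]
  constructor
  · calc _ ≤ ∑ k ∈ range n₁, (nthPrime (n₁ + k) : ℝ) ^ (-t) :=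
          le_sum_range_nthPrime_rpow_neg ht hn₁
      _ < ∑ k ∈ range (n₁ + 1), (nthPrime (n₁ + k) : ℝ) ^ (-t) := by
          rw [sum_range_succ]
          exact lt_add_of_pos_right _ (hpos _)
      _ ≤ ∑' k, (nthPrime (n₁ + k) : ℝ) ^ (-t) :=
          hsummable.sum_le_tsum _ fun k _ ↦ (hpos (n₁ + k)).le
  · calc ∑' k, (nthPrime (n₁ + k) : ℝ) ^ (-t)
        ≤ (2 * n₁ + 1 + 3 * n₁ / (t - 1)) * (nthPrime n₁ : ℝ) ^ (-t) :=
          Real.tsum_le_of_sum_range_le (fun k ↦ (hpos (n₁ + k)).le) hupper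
      _ < 2 ^ (1 + t) * n₁ / (t - 1) * (nthPrime n₁ : ℝ) ^ (-t) :=
          mul_lt_mul_of_pos_right (two_mul_add_one_add_lt ht (by exact_mod_cast hn₁)) (hpos n₁)
      _ = 2 ^ (1 + t) * n₁ / ((t - 1) * (nthPrime n₁ : ℝ) ^ t) := by
          rw [rpow_neg (nthPrime n₁).cast_nonneg, ← div_eq_mul_inv, div_div]

theorem tail_sum_reciprocal_prime_powers_vs_nth_prime
    (t : ℝ) (ht : 1 < t)
    (n₁ : ℕ) (hn₁₁ : 6 ≤ n₁) (hn₁₂ : 1 / (1 - (2 : ℝ) ^ (-(1 / (t - 1)))) ≤ (n₁ : ℝ)) :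
    (1 - (2 : ℝ) ^ (1 - t)) * (n₁ : ℝ) / (2 ^ (2 * t) * (t - 1) * (nthPrime n₁ : ℝ) ^ t) <
        (∑' n : {n : ℕ // n₁ ≤ n}, (nthPrime (n : ℕ) : ℝ) ^ (-t)) ∧
      (∑' n : {n : ℕ // n₁ ≤ n}, (nthPrime (n : ℕ) : ℝ) ^ (-t)) <
        (2 : ℝ) ^ (1 + t) * (n₁ : ℝ) / ((t - 1) * (nthPrime n₁ : ℝ) ^ t) :=
  tail_sum_reciprocal_prime_powers_vs_nth_prime_general t ht n₁ (by omega)
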